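/- Let θ : A → A^ℓ be a primitive substitution of constant length ℓ over a finite alphabet A with at least two letters, regarded as acting on the Besicovitch space [Σ]. Then there exists m ≥ 1 such that θ^m : [Σ] → [Σ] is a contraction (equivalently c(θ^m) > 0) if and only if θ has a coincidence, i.e. there exist k ≥ 1 and 0 ≤ j < ℓ^k such that θ^k(a)_j is the same letter for all a ∈ A. -/

import Mathlib

open Filter Topology Set MeasureTheory
open scoped ENNReal

noncomputable section

/-- The upper density of a set of natural numbers. -/
def upperDensity (E : Set ℕ) : ℝ :=
  Filter.limsup (fun n : ℕ =>
    (∑ k ∈ Finset.range n, E.indicator (fun _ => (1 : ℝ)) k) / n) Filter.atTop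

/-- `S` is an `(f,δ,ν)`-separated subset of `X`, with respect to the distance `ρ`. -/
def IsSepSet {α : Type*} (ρ : α → α → ℝ) (f : α → α) (X : Set α) (δ ν : ℝ) (S : Set α) : Prop :=
  S ⊆ X ∧ ∀ x ∈ S, ∀ y ∈ S, x ≠ y → ν ≤ upperDensity {k : ℕ | δ ≤ ρ (f^[k] x) (f^[k] y)}

/-- The asymptotic separation number `Sep(f,δ,ν)` of `f` on `X`. -/
def sepNum {α : Type*} (ρ : α → α → ℝ) (f : α → α) (X : Set α) (δ ν : ℝ) : ℕ∞ :=
  ⨆ (S : Set α) (_ : IsSepSet ρ f X δ ν S), S.encard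

/-- The quantity `log s / (- log ν)`, with value `∞` if `s = ∞`. -/
def logRatio (s : ℕ∞) (ν : ℝ) : ℝ≥0∞ :=
  if s = ⊤ then ⊤ else ENNReal.ofReal (Real.log (s.toNat : ℝ) / (- Real.log ν))

/-- The lower amorphic complexity of `f` on `X`. -/
def acLower {α : Type*} (ρ : α → α → ℝ) (f : α → α) (X : Set α) : ℝ≥0∞ :=
  ⨆ (δ : ℝ) (_ : 0 < δ),
    Filter.liminf (fun ν : ℝ => logRatio (sepNum ρ f X δ ν) ν) (𝓝[>] (0 : ℝ))

/-- The upper amorphic complexity of `f` on `X`. -/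
def acUpper {α : Type*} (ρ : α → α → ℝ) (f : α → α) (X : Set α) : ℝ≥0∞ :=
  ⨆ (δ : ℝ) (_ : 0 < δ),
    Filter.limsup (fun ν : ℝ => logRatio (sepNum ρ f X δ ν) ν) (𝓝[>] (0 : ℝ))

/-- The left shift on `A^ℤ`. -/
def shift {A : Type*} (x : ℤ → A) : ℤ → A := fun n => x (n + 1)

open scoped Classical in
/-- The Cantor metric `d(x,y) = 2^{-min{|k| : x_k ≠ y_k}}` on `A^ℤ`. -/
def cantorDist {A : Type*} (x y : ℤ → A) : ℝ :=
  if x = y then 0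
  else (2 : ℝ) ^ (-((sInf {n : ℕ | ∃ k : ℤ, k.natAbs = n ∧ x k ≠ y k} : ℕ) : ℤ))

/-- The Besicovitch pseudometric `D_1` on `A^ℤ`. -/
def besD1 {A : Type*} (x y : ℤ → A) : ℝ :=
  upperDensity {k : ℕ | x (k : ℤ) ≠ y (k : ℤ)}

/-- The Besicovitch pseudometric `D_B` associated to a map `f` and a distance `ρ`. -/
def besDB {α : Type*} (ρ : α → α → ℝ) (f : α → α) (x y : α) : ℝ :=
  Filter.limsup (fun n : ℕ => (∑ k ∈ Finset.range n, ρ (f^[k] x) (f^[k] y)) / n) Filter.atTop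

/-- The pseudometric `D_δ` on `A^ℤ` associated to a metric `ρ` on `A^ℤ`. -/
def Ddelta {A : Type*} (ρ : (ℤ → A) → (ℤ → A) → ℝ) (δ : ℝ) (x y : ℤ → A) : ℝ :=
  upperDensity {k : ℕ | δ ≤ ρ (shift^[k] x) (shift^[k] y)}

/-- The closure of the two-sided shift orbit of `x₀`. -/
def orbitClosure {A : Type*} [TopologicalSpace A] (x₀ : ℤ → A) : Set (ℤ → A) :=
  closure {y | ∃ k : ℤ, y = fun n => x₀ (n + k)}

/-- The extension of a constant length substitution `θ : A → A^ℓ` to `A^ℤ`,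
via `θ(x)_{ℓk+i} = θ(x_k)_i`. -/
def substApply {A : Type*} {ℓ : ℕ} (hℓ : 0 < ℓ) (θ : A → Fin ℓ → A)
    (x : ℤ → A) : ℤ → A := fun n =>
  θ (x (n / (ℓ : ℤ))) ⟨(n % (ℓ : ℤ)).toNat, by
    have h1 : 0 ≤ n % (ℓ : ℤ) := Int.emod_nonneg n (by exact_mod_cast hℓ.ne')
    have h2 : n % (ℓ : ℤ) < (ℓ : ℤ) := Int.emod_lt_of_pos n (by exact_mod_cast hℓ)
    omega⟩

/-- A constant length substitution is primitive if some power `θ^m` of it is such that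
every letter `b` occurs in every word `θ^m(a)`. -/
def IsPrimitive {A : Type*} {ℓ : ℕ} (hℓ : 0 < ℓ) (θ : A → Fin ℓ → A) : Prop :=
  ∃ m : ℕ, 1 ≤ m ∧ ∀ a b : A, ∃ j : ℤ, 0 ≤ j ∧ j < (ℓ : ℤ) ^ m ∧
    (substApply hℓ θ)^[m] (fun _ => a) j = b

open scoped Classical in
/-- The number of positions at which the words `θ(a)` and `θ(b)` agree. -/
def coincCount {A : Type*} {ℓ : ℕ} (θ : A → Fin ℓ → A) (a b : A) : ℕ :=
  (Finset.univ.filter (fun j : Fin ℓ => θ a j = θ b j)).card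

/-- `c(θ)`, the minimum of `coincCount θ a b` over pairs `a ≠ b`. -/
def cMin {A : Type*} {ℓ : ℕ} (θ : A → Fin ℓ → A) : ℕ :=
  sInf {n : ℕ | ∃ a b : A, a ≠ b ∧ coincCount θ a b = n}

/-- `C(θ)`, the maximum of `coincCount θ a b` over pairs `a ≠ b`. -/
def cMax {A : Type*} {ℓ : ℕ} (θ : A → Fin ℓ → A) : ℕ :=
  sSup {n : ℕ | ∃ a b : A, a ≠ b ∧ coincCount θ a b = n}

/-- `S` is `ε`-separated with respect to the distance `ρ`. -/
def IsEpsSeparated {α : Type*} (ρ : α → α → ℝ) (ε : ℝ) (S : Set α) : Prop :=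
  ∀ x ∈ S, ∀ y ∈ S, x ≠ y → ε ≤ ρ x y

/-- `M_ε(E)`: the maximal cardinality of an `ε`-separated subset of `E`. -/
def packNum {α : Type*} (ρ : α → α → ℝ) (ε : ℝ) (E : Set α) : ℕ∞ :=
  ⨆ (S : Set α) (_ : S ⊆ E ∧ IsEpsSeparated ρ ε S), S.encard

/-- The lower box dimension of `E` with respect to the distance `ρ`. -/
def lowerBoxDim {α : Type*} (ρ : α → α → ℝ) (E : Set α) : ℝ≥0∞ :=
  Filter.liminf (fun ε : ℝ => logRatio (packNum ρ ε E) ε) (𝓝[>] (0 : ℝ))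

/-- The upper box dimension of `E` with respect to the distance `ρ`. -/
def upperBoxDim {α : Type*} (ρ : α → α → ℝ) (E : Set α) : ℝ≥0∞ :=
  Filter.limsup (fun ε : ℝ => logRatio (packNum ρ ε E) ε) (𝓝[>] (0 : ℝ))

/-- Mean equicontinuity of `f` on `X` with respect to the distance `ρ`. -/
def MeanEquicontinuousOn {α : Type*} (ρ : α → α → ℝ) (f : α → α) (X : Set α) : Prop :=
  ∀ ν : ℝ, 0 < ν → ∃ δ : ℝ, 0 < δ ∧ ∀ x ∈ X, ∀ y ∈ X, ρ x y < δ → besDB ρ f x y < ν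

/-- The subshift `X` has discrete spectrum: for every shift-invariant Borel probability
measure giving `X` full measure (there is exactly one for the systems under consideration),
`L²` has a Hilbert basis of eigenfunctions of the shift. -/
def HasDiscreteSpectrum {A : Type*} [MeasurableSpace A] (X : Set (ℤ → A)) : Prop :=
  ∀ μ : Measure (ℤ → A), IsProbabilityMeasure μ → MeasurePreserving shift μ μ → μ X = 1 →
    ∃ (ι : Type) (b : HilbertBasis ι ℂ (Lp ℂ 2 μ)), ∀ i : ι, ∃ c : ℂ,
      (fun z => (b i : Lp ℂ 2 μ) (shift z)) =ᵐ[μ] (fun z => c * (b i : Lp ℂ 2 μ) z)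

end

/-!
Let `η` be a substitution of constant length `L`. A block of length `L` in `η x` and `η y` agrees
everywhere if the letters above it agree, and in at least `c(η)` places otherwise, so
`D_1 (η x, η y) ≤ (1 - c(η) / L) * D_1 (x, y)`. Conversely, if `η a` and `η b` never agree, then `η`
sends two constant sequences at distance `1` to sequences at distance `1`. For `η = θ^m`, this shows
that `θ^m` contracts if and only if any two letters are merged by a column `a ↦ θ^m(a)_j`.

The columns of the powers of `θ` form a semigroup of self-maps of `A`. If any two letters are merged
by some column, then a column whose range has minimal cardinality is constant, since composing it
with a column that merges two points of its range would shrink the range further.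
-/

theorem exists_mem_forall_smul_eq_of_pairwise {S X : Type*} [Semigroup S]
    [SemigroupAction S X] [Finite X] (M : Subsemigroup S) (hM : (M : Set S).Nonempty)
    (h : Pairwise fun x y : X => ∃ g ∈ M, g • x = g • y) :
    ∃ g ∈ M, ∀ x y : X, g • x = g • y := by
  let rangeCard (g : S) : ℕ := (range fun x : X => g • x).ncard
  obtain ⟨f, hfM, hfmin⟩ := exists_minimalFor_of_wellFoundedLT (· ∈ M) rangeCard hM
  refine ⟨f, hfM, fun x y => ?_⟩
  by_contra hne
  obtain ⟨g, hgM, hg⟩ := h hne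
  have hrange : (range fun z : X => (g * f) • z) = (g • ·) '' range fun z : X => f • z := by
    simp only [mul_smul, ← range_comp, Function.comp_def]
  have hle : rangeCard (g * f) ≤ rangeCard f := by
    simp only [rangeCard, hrange]
    exact ncard_image_le
  have heq : rangeCard (g * f) = rangeCard f := hle.antisymm (hfmin (M.mul_mem hgM hfM) hle)
  simp only [rangeCard, hrange] at heq
  exact hne ((ncard_image_iff (toFinite _)).1 heq (mem_range_self x) (mem_range_self y) hg)

theorem emod_mul_right_ediv_self (n a : ℤ) {b : ℤ} (hb : 0 < b) :
    n % (b * a) / b = n / b % a := by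
  rw [Int.emod_def, Int.emod_def, mul_assoc, Int.sub_mul_ediv_left _ _ hb.ne',
    Int.ediv_ediv_of_nonneg hb.le]

section UpperDensity

variable {E F : Set ℕ} [DecidablePred (· ∈ E)] [DecidablePred (· ∈ F)]

variable (E) in
theorem upperDensity_eq_limsup_count :
    upperDensity E = limsup (fun n : ℕ => (Nat.count (· ∈ E) n : ℝ) / n) atTop := by
  simp [upperDensity, Nat.count_eq_card_filter_range, Set.indicator_apply]

variable (E) in
theorem count_div_le_one (n : ℕ) : (Nat.count (· ∈ E) n : ℝ) / n ≤ 1 :=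
  div_le_one_of_le₀ (mod_cast Nat.count_le _) n.cast_nonneg

theorem upperDensity_univ : upperDensity univ = 1 := by
  rw [upperDensity_eq_limsup_count]
  refine Tendsto.limsup_eq (tendsto_const_nhds.congr' ?_)
  filter_upwards [eventually_ne_atTop 0] with n hn
  simp [hn]

theorem eventually_count_div_lt {d : ℝ} (hd : upperDensity E < d) :
    ∀ᶠ n : ℕ in atTop, (Nat.count (· ∈ E) n : ℝ) / n < d := by
  rw [upperDensity_eq_limsup_count] at hd
  exact eventually_lt_of_limsup_lt hd (isBoundedUnder_of ⟨1, count_div_le_one E⟩)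

theorem upperDensity_le_of_tendsto {b : ℕ → ℝ} {l : ℝ}
    (hE : ∀ᶠ n : ℕ in atTop, (Nat.count (· ∈ E) n : ℝ) / n ≤ b n) (hb : Tendsto b atTop (𝓝 l)) :
    upperDensity E ≤ l := by
  rw [upperDensity_eq_limsup_count, ← hb.limsup_eq]
  have hbelow : IsBoundedUnder (· ≥ ·) atTop fun n : ℕ => (Nat.count (· ∈ E) n : ℝ) / n :=
    isBoundedUnder_of ⟨0, fun n => by positivity⟩
  exact limsup_le_limsup hE hbelow.isCoboundedUnder_le hb.isBoundedUnder_le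

theorem count_mul_le_mul_count {L c : ℕ} (hFE : ∀ n ∈ F, n / L ∈ E)
    (hF : ∀ q ∈ E, Nat.count (fun i => L * q + i ∈ F) L ≤ c) (q : ℕ) :
    Nat.count (· ∈ F) (L * q) ≤ c * Nat.count (· ∈ E) q := by
  induction q with
  | zero => simp
  | succ q ih =>
    have hblock : Nat.count (fun i => L * q + i ∈ F) L ≤ c * if q ∈ E then 1 else 0 := by
      by_cases hq : q ∈ E
      · simpa [hq] using hF q hq
      · have hempty : ∀ i < L, L * q + i ∉ F := fun i hi hiF => hq <| by
          simpa [Nat.mul_add_div (Nat.zero_lt_of_lt hi), Nat.div_eq_of_lt hi] using hFE _ hiF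
        exact (Nat.count_iff_forall_not.2 hempty).trans_le (Nat.zero_le _)
    rw [mul_add, mul_one, Nat.count_add, Nat.count_succ, mul_add]
    exact add_le_add ih hblock

theorem count_div_le_of_blocks {L c : ℕ} (hL : 0 < L) (hFE : ∀ n ∈ F, n / L ∈ E)
    (hF : ∀ q ∈ E, Nat.count (fun i => L * q + i ∈ F) L ≤ c) (n : ℕ) :
    (Nat.count (· ∈ F) n : ℝ) / n ≤
      c / L * (Nat.count (· ∈ E) (n / L) / (n / L : ℕ)) + L / n := by
  have hcount : Nat.count (· ∈ F) n ≤ c * Nat.count (· ∈ E) (n / L) + L :=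
    calc Nat.count (· ∈ F) n
        ≤ Nat.count (· ∈ F) (L * (n / L) + L) :=
          Nat.count_monotone _ (Nat.lt_mul_div_succ n hL).le
      _ ≤ Nat.count (· ∈ F) (L * (n / L)) + L := by
          rw [Nat.count_add]
          exact Nat.add_le_add_left (Nat.count_le _) _
      _ ≤ c * Nat.count (· ∈ E) (n / L) + L :=
          Nat.add_le_add_right (count_mul_le_mul_count hFE hF _) _
  -- For `n < L` the ratio at `n / L = 0` is `0 / 0 = 0`, and the term `L / n` alone is the bound.
  obtain hq | hq := (n / L).eq_zero_or_pos
  · rw [hq, Nat.count_zero, mul_zero, zero_add] at hcount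
    simp only [hq, Nat.count_zero, Nat.cast_zero, zero_div, mul_zero, zero_add]
    gcongr
  · have hLq : (L : ℝ) * (n / L : ℕ) ≤ n := mod_cast Nat.mul_div_le n L
    calc (Nat.count (· ∈ F) n : ℝ) / n
        ≤ (c * Nat.count (· ∈ E) (n / L) + L : ℝ) / n := by gcongr; exact_mod_cast hcount
      _ = c * Nat.count (· ∈ E) (n / L) / n + L / n := add_div _ _ _
      _ ≤ c * Nat.count (· ∈ E) (n / L) / (L * (n / L : ℕ)) + L / n := by gcongr
      _ = c / L * (Nat.count (· ∈ E) (n / L) / (n / L : ℕ)) + L / n := by rw [mul_div_mul_comm]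

omit [DecidablePred (· ∈ E)] in
theorem upperDensity_le_of_blocks {L c : ℕ} (hL : 0 < L)
    (hFE : ∀ n ∈ F, n / L ∈ E) (hF : ∀ q ∈ E, Nat.count (fun i => L * q + i ∈ F) L ≤ c) :
    upperDensity F ≤ c / L * upperDensity E := by
  classical
  have hbound : ∀ d > upperDensity E, upperDensity F ≤ c / L * d := fun d hd => by
    have hlim : Tendsto (fun n : ℕ => c / L * d + (L : ℝ) / n) atTop (𝓝 (c / L * d)) := by
      simpa using (tendsto_const_div_atTop_nhds_zero_nat (L : ℝ)).const_add (c / L * d)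
    refine upperDensity_le_of_tendsto ?_ hlim
    filter_upwards [(Nat.tendsto_div_const_atTop hL.ne').eventually (eventually_count_div_lt hd)]
      with n hn
    exact (count_div_le_of_blocks hL hFE hF n).trans (by gcongr)
  have hcont : Tendsto (fun d : ℝ => (c : ℝ) / L * d) (𝓝[>] upperDensity E)
      (𝓝 (c / L * upperDensity E)) :=
    ((continuous_const_mul _).tendsto _).mono_left nhdsWithin_le_nhds
  exact ge_of_tendsto hcont (eventually_mem_nhdsWithin.mono hbound)

end UpperDensity

variable {A : Type*}

theorem besD1_eq_one_of_forall_ne {x y : ℤ → A} (h : ∀ k : ℕ, x k ≠ y k) : besD1 x y = 1 := by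
  simp [besD1, h, upperDensity_univ]

section Substitution

variable {L : ℕ} (hL : 0 < L) (η : A → Fin L → A)

theorem substApply_mul_add (x : ℤ → A) (q : ℤ) (i : Fin L) :
    substApply hL η x (L * q + i) = η (x q) i := by
  have hL' : (L : ℤ) ≠ 0 := mod_cast hL.ne'
  have hi : (i : ℤ) < L := mod_cast i.isLt
  have hdiv : ((L : ℤ) * q + i) / L = q := by
    rw [Int.mul_add_ediv_left _ _ hL', Int.ediv_eq_zero_of_lt (by positivity) hi, add_zero]
  have hmod : ((L : ℤ) * q + i) % L = i := by
    rw [Int.mul_add_emod_self_left, Int.emod_eq_of_lt (by positivity) hi]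
  simp [substApply, hdiv, hmod]

theorem count_substApply_ne_add_coincCount [DecidableEq A] (x y : ℤ → A) (q : ℤ) :
    Nat.count (fun i : ℕ => substApply hL η x (L * q + i) ≠ substApply hL η y (L * q + i)) L +
      coincCount η (x q) (y q) = L := by
  have hcount :
      Nat.count (fun i : ℕ => substApply hL η x (L * q + i) ≠ substApply hL η y (L * q + i)) L =
        (Finset.univ.filter fun i : Fin L => η (x q) i ≠ η (y q) i).card := by
    rw [Nat.count_eq_card_filter_range, Finset.card_filter, Finset.card_filter,
      ← Fin.sum_univ_eq_sum_range fun i : ℕ =>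
        if substApply hL η x (L * q + i) ≠ substApply hL η y (L * q + i) then 1 else 0]
    simp only [substApply_mul_add]
  rw [hcount, coincCount, add_comm]
  convert Finset.card_filter_add_card_filter_not (s := Finset.univ)
    (fun i : Fin L => η (x q) i = η (y q) i)
  exact (Finset.card_fin L).symm

theorem cMin_le_coincCount {a b : A} (hab : a ≠ b) : cMin η ≤ coincCount η a b :=
  Nat.sInf_le ⟨a, b, hab, rfl⟩

theorem coincCount_pos_iff {a b : A} : 0 < coincCount η a b ↔ ∃ j, η a j = η b j := by
  simp [coincCount, Finset.card_pos, Finset.filter_nonempty_iff]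

theorem cMin_pos_iff [Nontrivial A] :
    0 < cMin η ↔ Pairwise fun a b => ∃ j, η a j = η b j := by
  refine ⟨fun h a b hab => (coincCount_pos_iff η).1 (h.trans_le (cMin_le_coincCount η hab)),
    fun h => ?_⟩
  obtain ⟨a₀, b₀, hab₀⟩ := exists_pair_ne A
  obtain ⟨a, b, hab, hmin⟩ := Nat.sInf_mem
    (s := {n | ∃ a b : A, a ≠ b ∧ coincCount η a b = n}) ⟨_, a₀, b₀, hab₀, rfl⟩
  exact ((coincCount_pos_iff η).2 (h hab)).trans_eq hmin

theorem cMin_le_length : cMin η ≤ L := by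
  obtain hη | ⟨_, a, b, hab, rfl⟩ :=
    {n | ∃ a b : A, a ≠ b ∧ coincCount η a b = n}.eq_empty_or_nonempty
  · simp [cMin, hη]
  · exact (cMin_le_coincCount η hab).trans ((Finset.card_le_univ _).trans_eq (Fintype.card_fin L))

theorem besD1_substApply_le (x y : ℤ → A) :
    besD1 (substApply hL η x) (substApply hL η y) ≤ (1 - cMin η / L) * besD1 x y := by
  classical
  have hfactor : ((L - cMin η : ℕ) : ℝ) / L = 1 - cMin η / L := by
    rw [Nat.cast_sub (cMin_le_length η), sub_div, div_self (by positivity)]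
  rw [← hfactor]
  refine upperDensity_le_of_blocks hL (fun n hn => ?_) fun q hq => ?_
  · simp only [mem_ofPred_eq, Int.natCast_ediv] at hn ⊢
    exact fun hxy => hn (by simp [substApply, hxy])
  · have hblock := count_substApply_ne_add_coincCount hL η x y q
    have hmin : cMin η ≤ coincCount η (x q) (y q) := cMin_le_coincCount η hq
    simp only [mem_ofPred_eq, Nat.cast_add, Nat.cast_mul]
    omega

theorem besD1_substApply_const_eq_one {a b : A} (h : ∀ j, η a j ≠ η b j) :
    besD1 (substApply hL η fun _ => a) (substApply hL η fun _ => b) = 1 :=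
  besD1_eq_one_of_forall_ne fun _ => h _

theorem exists_contraction_iff_cMin_pos [Nontrivial A] :
    (∃ r : ℝ, r < 1 ∧ ∀ x y : ℤ → A,
        besD1 (substApply hL η x) (substApply hL η y) ≤ r * besD1 x y) ↔ 0 < cMin η := by
  refine ⟨?_, fun h => ⟨1 - cMin η / L, sub_lt_self 1 (by positivity), besD1_substApply_le hL η⟩⟩
  rintro ⟨r, hr, hcontr⟩
  refine (cMin_pos_iff η).2 fun a b hab => ?_
  by_contra! hne
  have hle := hcontr (fun _ => a) fun _ => b
  rw [besD1_substApply_const_eq_one hL η hne, besD1_eq_one_of_forall_ne fun _ => hab,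
    mul_one] at hle
  exact hle.not_gt hr

end Substitution

section Powers

variable {ℓ : ℕ} (hℓ : 0 < ℓ) (θ : A → Fin ℓ → A)

/-- The power `θ^m` of a substitution of constant length `ℓ`, as a substitution of constant length
`ℓ^m`. The word `θ^m(a)` is read off the image of the constant sequence `a` at the positions
`0, …, ℓ^m - 1`. -/
def substPow (m : ℕ) (a : A) (j : Fin (ℓ ^ m)) : A :=
  (substApply hℓ θ)^[m] (fun _ => a) j

theorem iterate_substApply (m : ℕ) :
    (substApply hℓ θ)^[m] = substApply (pow_pos hℓ m) (substPow hℓ θ m) := by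
  induction m with
  | zero => ext x n; simp [substApply, substPow]
  | succ m ih =>
    ext x n
    have hℓ' : (0 : ℤ) < ℓ := mod_cast hℓ
    have hdiv : n / (ℓ : ℤ) / (ℓ : ℤ) ^ m = n / (ℓ : ℤ) ^ (m + 1) := by
      rw [Int.ediv_ediv_of_nonneg hℓ'.le, pow_succ']
    have hmoddiv : n % (ℓ : ℤ) ^ (m + 1) / ℓ = n / ℓ % (ℓ : ℤ) ^ m := by
      rw [pow_succ', emod_mul_right_ediv_self n _ hℓ']
    have hmodmod : n % (ℓ : ℤ) ^ (m + 1) % ℓ = n % ℓ :=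
      Int.emod_emod_of_dvd n (dvd_pow_self _ m.succ_ne_zero)
    have hnonneg (k : ℤ) (d : ℕ) : 0 ≤ k % (ℓ : ℤ) ^ d := Int.emod_nonneg k (by positivity)
    rw [Function.iterate_succ_apply', ih]
    simp only [substApply, substPow, Function.iterate_succ_apply', Nat.cast_pow,
      Int.toNat_of_nonneg (hnonneg _ _), hdiv, hmoddiv, hmodmod]

theorem substPow_add (k m : ℕ) (a : A) (i : Fin (ℓ ^ k)) (j : Fin (ℓ ^ m))
    (h : ℓ ^ k * j + i < ℓ ^ (k + m)) :
    substPow hℓ θ (k + m) a ⟨ℓ ^ k * j + i, h⟩ = substPow hℓ θ k (substPow hℓ θ m a j) i := by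
  have hletter := substApply_mul_add (pow_pos hℓ k) (substPow hℓ θ k)
    ((substApply hℓ θ)^[m] fun _ => a) j i
  rw [← iterate_substApply, ← Function.iterate_add_apply] at hletter
  simpa [substPow] using hletter

/-- The semigroup of columns of a substitution `θ`: the self-maps `a ↦ θ^k(a)_j` of the alphabet,
for `k ≥ 1` and `0 ≤ j < ℓ^k`. -/
def columnSemigroup : Subsemigroup (Function.End A) where
  carrier := {f | ∃ k, 1 ≤ k ∧ ∃ j : Fin (ℓ ^ k), f = fun a => substPow hℓ θ k a j}
  mul_mem' := by
    rintro _ _ ⟨k, hk, i, rfl⟩ ⟨m, -, j, rfl⟩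
    have hlt : ℓ ^ k * j + i < ℓ ^ (k + m) := by
      calc ℓ ^ k * j + i < ℓ ^ k * (j + 1) := by rw [mul_add_one]; gcongr; exact i.isLt
        _ ≤ ℓ ^ (k + m) := by rw [pow_add]; gcongr; exact j.isLt
    exact ⟨k + m, hk.trans (Nat.le_add_right k m), ⟨_, hlt⟩,
      funext fun a => (substPow_add hℓ θ k m a i j hlt).symm⟩

/-- A substitution `θ` has a coincidence (of order `k ≥ 1`) if, for some position `j`, the letter
`θ^k(a)_j` does not depend on `a`. -/
def HasCoincidence : Prop :=
  ∃ k, 1 ≤ k ∧ ∃ j : Fin (ℓ ^ k), ∀ a b, substPow hℓ θ k a j = substPow hℓ θ k b j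

theorem exists_cMin_substPow_pos_iff_hasCoincidence [Finite A] [Nontrivial A] :
    (∃ m, 1 ≤ m ∧ 0 < cMin (substPow hℓ θ m)) ↔ HasCoincidence hℓ θ := by
  constructor
  · rintro ⟨m, hm, hpos⟩
    have hmerge : Pairwise fun a b : A => ∃ f ∈ columnSemigroup hℓ θ, f • a = f • b :=
      fun a b hab =>
        let ⟨j, hj⟩ := (cMin_pos_iff _).1 hpos hab
        ⟨_, ⟨m, hm, j, rfl⟩, hj⟩
    obtain ⟨a, b, hab⟩ := exists_pair_ne A
    obtain ⟨f₀, hf₀, -⟩ := hmerge hab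
    obtain ⟨_, ⟨k, hk, j, rfl⟩, hconst⟩ := exists_mem_forall_smul_eq_of_pairwise _ ⟨f₀, hf₀⟩ hmerge
    exact ⟨k, hk, j, hconst⟩
  · rintro ⟨k, hk, j, hconst⟩
    exact ⟨k, hk, (cMin_pos_iff _).2 fun a b _ => ⟨j, hconst a b⟩⟩

theorem hasCoincidence_iff_exists_int :
    HasCoincidence hℓ θ ↔ ∃ k : ℕ, 1 ≤ k ∧ ∃ j : ℤ, 0 ≤ j ∧ j < (ℓ : ℤ) ^ k ∧ ∀ a b : A,
      (substApply hℓ θ)^[k] (fun _ => a) j = (substApply hℓ θ)^[k] (fun _ => b) j := by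
  refine exists_congr fun k => and_congr_right fun _ => ⟨?_, ?_⟩
  · rintro ⟨j, hj⟩
    exact ⟨j, by positivity, mod_cast j.isLt, hj⟩
  · rintro ⟨j, hj₀, hjlt, hj⟩
    lift j to ℕ using hj₀
    exact ⟨⟨j, mod_cast hjlt⟩, hj⟩

end Powers

theorem substitution_power_contraction_iff_coincidence_general [Finite A] [Nontrivial A]
    {ℓ : ℕ} (hℓ : 0 < ℓ) (θ : A → Fin ℓ → A) :
    [∃ m : ℕ, 1 ≤ m ∧ ∃ r : ℝ, r < 1 ∧ ∀ x y : ℤ → A,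
        besD1 ((substApply hℓ θ)^[m] x) ((substApply hℓ θ)^[m] y) ≤ r * besD1 x y,
      ∃ m : ℕ, 1 ≤ m ∧ 0 < cMin (substPow hℓ θ m),
      ∃ k : ℕ, 1 ≤ k ∧ ∃ j : ℤ, 0 ≤ j ∧ j < (ℓ : ℤ) ^ k ∧ ∀ a b : A,
        (substApply hℓ θ)^[k] (fun _ => a) j = (substApply hℓ θ)^[k] (fun _ => b) j].TFAE := by
  tfae_have 1 ↔ 2 := by simp only [iterate_substApply, exists_contraction_iff_cMin_pos]
  tfae_have 2 ↔ 3 := by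
    rw [exists_cMin_substPow_pos_iff_hasCoincidence, hasCoincidence_iff_exists_int]
  tfae_finish

/-- For a primitive constant length substitution `θ` over an alphabet
with at least two letters, some power `θ^m` (`m ≥ 1`) is a contraction of the Besicovitch
space `([Σ],D_1)` (equivalently `c(θ^m) > 0`) if and only if `θ` has a coincidence. -/
theorem substitution_power_contraction_iff_coincidence
    {A : Type} [Fintype A] (hA : ∃ a b : A, a ≠ b)
    {ℓ : ℕ} (hℓ : 0 < ℓ) (θ : A → Fin ℓ → A) (hprim : IsPrimitive hℓ θ) :
    (∃ m : ℕ, 1 ≤ m ∧ ∃ r : ℝ, r < 1 ∧ ∀ x y : ℤ → A,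
        besD1 ((substApply hℓ θ)^[m] x) ((substApply hℓ θ)^[m] y) ≤ r * besD1 x y) ↔
      (∃ k : ℕ, 1 ≤ k ∧ ∃ j : ℤ, 0 ≤ j ∧ j < (ℓ : ℤ) ^ k ∧ ∀ a b : A,
        (substApply hℓ θ)^[k] (fun _ => a) j = (substApply hℓ θ)^[k] (fun _ => b) j) := by
  have : Nontrivial A := ⟨hA⟩
  exact (substitution_power_contraction_iff_coincidence_general hℓ θ).out 0 2
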